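/- Let M be an I-unitary operator on K, let U be a unitary operator on H, and write [[A,B],[C,D]] for the block entries of the J-unitary operator C M C*. Let Ψ_U : H → K, Ψ_U h = ((1/2)(U + 1)h, (i/2)(U − 1)h), and let (a', b') be the block components of M Ψ_U : H → K (i.e. M Ψ_U h = (a'h, b'h)). Then a' + i b' is invertible and (a' − i b')(a' + i b')⁻¹ = (AU + B)(CU + D)⁻¹; that is, the stereographic projection intertwines the action of M on I-Lagrangian frames with the Möbius action of C M C* on unitaries. -/

import Mathlib

/-!
Conjugation by the Cayley transform `𝒞` turns the form `i I` into `J`, since `J 𝒞 = 𝒞 (i I)`, and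
`𝒞` maps the frame `Ψ_U` to the column `(U, 1) / √2`. Hence `N = 𝒞 M 𝒞* = [[A,B],[C,D]]` is
`J`-unitary, and the two rows of `N (U, 1) = √2 𝒞 M Ψ_U` read `A U + B = a' - i b'` and
`C U + D = a' + i b'`; only the invertibility of `C U + D` remains.

Since `U` is a contraction, the form `J` is nonpositive on the vectors `(U h, h)`, hence on their
images under `N`, whose second components therefore dominate: `C U + D` is bounded below. Its
adjoint is injective because `N*` is `J`-unitary as well: it maps `(0, v)` to `(C* v, D* v)`, so
that `‖C* v‖² - ‖D* v‖² = -‖v‖²`, while `(C U + D)* v = 0` forces `‖D* v‖ ≤ ‖C* v‖`.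
-/

open ContinuousLinearMap

noncomputable section

variable {H : Type*} [NormedAddCommGroup H] [InnerProductSpace ℂ H] [CompleteSpace H]

/-- The Hilbert space `K = H ⊕ H` (with the `ℓ²` product norm). -/
abbrev Kspace (H : Type*) [NormedAddCommGroup H] [InnerProductSpace ℂ H] : Type _ :=
  WithLp 2 (H × H)

/-- The block operator `[[A,B],[C,D]]` on `K`, acting by `(x,y) ↦ (Ax + By, Cx + Dy)`. -/
def blockOp (A B C D : H →L[ℂ] H) : Kspace H →L[ℂ] Kspace H :=
  (((WithLp.prodContinuousLinearEquiv 2 ℂ H H).symm : (H × H) →L[ℂ] Kspace H)) ∘L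
    (((A ∘L ContinuousLinearMap.fst ℂ H H) + (B ∘L ContinuousLinearMap.snd ℂ H H)).prod
      ((C ∘L ContinuousLinearMap.fst ℂ H H) + (D ∘L ContinuousLinearMap.snd ℂ H H))) ∘L
    (((WithLp.prodContinuousLinearEquiv 2 ℂ H H) : Kspace H →L[ℂ] H × H))

/-- Upper-left block of an operator on `K`. -/
def blkA (M : Kspace H →L[ℂ] Kspace H) : H →L[ℂ] H :=
  ContinuousLinearMap.fst ℂ H H ∘L
    ((WithLp.prodContinuousLinearEquiv 2 ℂ H H) : Kspace H →L[ℂ] H × H) ∘L M ∘L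
    ((WithLp.prodContinuousLinearEquiv 2 ℂ H H).symm : (H × H) →L[ℂ] Kspace H) ∘L
    ContinuousLinearMap.inl ℂ H H

/-- Upper-right block of an operator on `K`. -/
def blkB (M : Kspace H →L[ℂ] Kspace H) : H →L[ℂ] H :=
  ContinuousLinearMap.fst ℂ H H ∘L
    ((WithLp.prodContinuousLinearEquiv 2 ℂ H H) : Kspace H →L[ℂ] H × H) ∘L M ∘L
    ((WithLp.prodContinuousLinearEquiv 2 ℂ H H).symm : (H × H) →L[ℂ] Kspace H) ∘L
    ContinuousLinearMap.inr ℂ H H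

/-- Lower-left block of an operator on `K`. -/
def blkC (M : Kspace H →L[ℂ] Kspace H) : H →L[ℂ] H :=
  ContinuousLinearMap.snd ℂ H H ∘L
    ((WithLp.prodContinuousLinearEquiv 2 ℂ H H) : Kspace H →L[ℂ] H × H) ∘L M ∘L
    ((WithLp.prodContinuousLinearEquiv 2 ℂ H H).symm : (H × H) →L[ℂ] Kspace H) ∘L
    ContinuousLinearMap.inl ℂ H H

/-- Lower-right block of an operator on `K`. -/
def blkD (M : Kspace H →L[ℂ] Kspace H) : H →L[ℂ] H :=
  ContinuousLinearMap.snd ℂ H H ∘L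
    ((WithLp.prodContinuousLinearEquiv 2 ℂ H H) : Kspace H →L[ℂ] H × H) ∘L M ∘L
    ((WithLp.prodContinuousLinearEquiv 2 ℂ H H).symm : (H × H) →L[ℂ] Kspace H) ∘L
    ContinuousLinearMap.inr ℂ H H

/-- The Cayley transform `C = (1/√2)[[1, -i],[1, i]]`. -/
def Cayley (H : Type*) [NormedAddCommGroup H] [InnerProductSpace ℂ H] [CompleteSpace H] :
    Kspace H →L[ℂ] Kspace H :=
  blockOp (((Real.sqrt 2 : ℂ)⁻¹) • 1) ((-((Real.sqrt 2 : ℂ)⁻¹ * Complex.I)) • 1)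
    (((Real.sqrt 2 : ℂ)⁻¹) • 1) ((((Real.sqrt 2 : ℂ)⁻¹ * Complex.I)) • 1)

/-- The transfer operator `M^E = [[(E − V)T⁻¹, −T*],[T⁻¹, 0]]`, where the inverse `T⁻¹`
is given as the operator `Tinv`. -/
def transferOp (E : ℝ) (V T Tinv : H →L[ℂ] H) : Kspace H →L[ℂ] Kspace H :=
  blockOp ((((E : ℂ) • (1 : H →L[ℂ] H)) - V) ∘L Tinv) (-(adjoint T)) Tinv 0

/-- The product of transfer operators `M_N^E ⋯ M_1^E` (empty product for `N = 0`). -/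
def transferProd (V T Tinv : ℕ → H →L[ℂ] H) (E : ℝ) : ℕ → (Kspace H →L[ℂ] Kspace H)
  | 0 => 1
  | n + 1 => transferOp E (V (n + 1)) (T (n + 1)) (Tinv (n + 1)) ∘L transferProd V T Tinv E n

/-- The skew-adjoint unitary `I = [[0,-1],[1,0]]`. -/
def Iop (H : Type*) [NormedAddCommGroup H] [InnerProductSpace ℂ H] [CompleteSpace H] :
    Kspace H →L[ℂ] Kspace H :=
  blockOp 0 (-1) 1 0

/-- The frame `Ψ_U : H → K`, `Ψ_U h = ((1/2)(U + 1)h, (i/2)(U − 1)h)`. -/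
def frameOf (U : H →L[ℂ] H) : H →L[ℂ] Kspace H :=
  ((WithLp.prodContinuousLinearEquiv 2 ℂ H H).symm : (H × H) →L[ℂ] Kspace H) ∘L
    (((2 : ℂ)⁻¹ • (U + 1)).prod ((Complex.I * (2 : ℂ)⁻¹) • (U - 1)))

/-- The first block component of a map `H → K`. -/
def cmp1 (Ψ : H →L[ℂ] Kspace H) : H →L[ℂ] H :=
  ContinuousLinearMap.fst ℂ H H ∘L
    ((WithLp.prodContinuousLinearEquiv 2 ℂ H H) : Kspace H →L[ℂ] H × H) ∘L Ψ

/-- The second block component of a map `H → K`. -/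
def cmp2 (Ψ : H →L[ℂ] Kspace H) : H →L[ℂ] H :=
  ContinuousLinearMap.snd ℂ H H ∘L
    ((WithLp.prodContinuousLinearEquiv 2 ℂ H H) : Kspace H →L[ℂ] H × H) ∘L Ψ

section FormUnitary

/-- `n` is unitary for the form `j`: it is invertible and `n* j n = j`. On `K` this gives the
`J`-unitary and the `I`-unitary operators. -/
structure IsFormUnitary {R : Type*} [Monoid R] [Star R] (j n : R) : Prop where
  isUnit : IsUnit n
  star_mul_mul : star n * j * n = j

namespace IsFormUnitary

variable {R : Type*} [Monoid R] [StarMul R] {j n c : R}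

protected theorem star (hj : j * j = 1) (hn : IsFormUnitary j n) : IsFormUnitary j (star n) := by
  refine ⟨hn.isUnit.star, ?_⟩
  have hinv : n * j * star n * j = 1 := hn.isUnit.mul_right_cancel <| calc
    n * j * star n * j * n = n * j * (star n * j * n) := by simp only [mul_assoc]
    _ = 1 * n := by rw [hn.star_mul_mul, mul_assoc, hj, mul_one, one_mul]
  calc star (star n) * j * star n = n * j * star n * j * j := by
        rw [star_star, mul_assoc _ j j, hj, mul_one]
    _ = j := by rw [hinv, one_mul]

theorem conj_unitary (hc : c ∈ unitary R) (hn : IsFormUnitary (star c * j * c) n) :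
    IsFormUnitary j (c * n * star c) := by
  have hc_unit : IsUnit c := (Unitary.toUnits ⟨c, hc⟩).isUnit
  refine ⟨(hc_unit.mul hn.isUnit).mul hc_unit.star, ?_⟩
  calc star (c * n * star c) * j * (c * n * star c)
      = c * (star n * (star c * j * c) * n) * star c := by
        simp only [star_mul, star_star, mul_assoc]
    _ = c * star c * j * (c * star c) := by rw [hn.star_mul_mul]; simp only [mul_assoc]
    _ = j := by rw [Unitary.mul_star_self_of_mem hc, one_mul, mul_one]

theorem const_smul {S : Type*} [SMul S R] [SMulCommClass S R R] [IsScalarTower S R R] (a : S)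
    (hn : IsFormUnitary j n) : IsFormUnitary (a • j) n :=
  ⟨hn.isUnit, by rw [mul_smul_comm, smul_mul_assoc, hn.star_mul_mul]⟩

end IsFormUnitary

end FormUnitary

section NormedSpace

theorem norm_le_one_of_mem_unitary {A : Type*} [NormedRing A] [StarRing A] [CStarRing A] {u : A}
    (hu : u ∈ unitary A) : ‖u‖ ≤ 1 := by
  cases subsingleton_or_nontrivial A
  · simp [Subsingleton.elim u 0]
  · exact (CStarRing.norm_of_mem_unitary hu).le

theorem exists_antilipschitzWith_of_isUnit {𝕜 E : Type*} [NontriviallyNormedField 𝕜]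
    [NormedAddCommGroup E] [NormedSpace 𝕜 E] [CompleteSpace E] {T : E →L[𝕜] E} (hT : IsUnit T) :
    ∃ c, AntilipschitzWith c T :=
  (T.bijective_iff_dense_range_and_antilipschitz.1 (isUnit_iff_bijective.1 hT)).2

end NormedSpace

section HilbertSpace

variable {𝕜 E F : Type*} [RCLike 𝕜] [NormedAddCommGroup E] [InnerProductSpace 𝕜 E]
  [CompleteSpace E] [NormedAddCommGroup F] [InnerProductSpace 𝕜 F] [CompleteSpace F]

theorem bijective_of_antilipschitz_of_injective_adjoint {T : E →L[𝕜] F} {c : NNReal}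
    (hT : AntilipschitzWith c T) (hT' : Function.Injective (adjoint T)) :
    Function.Bijective T := by
  refine T.bijective_iff_dense_range_and_antilipschitz.2 ⟨?_, c, hT⟩
  rw [Submodule.topologicalClosure_eq_top_iff, T.orthogonal_range]
  exact LinearMap.ker_eq_bot.2 hT'

theorem IsFormUnitary.inner_map_map {J N : E →L[𝕜] E} (hN : IsFormUnitary J N) (x y : E) :
    inner 𝕜 (J (N x)) (N y) = inner 𝕜 (J x) y := by
  rw [← adjoint_inner_left, ← star_eq_adjoint]
  exact congrArg (fun T : E →L[𝕜] E ↦ inner 𝕜 (T x) y) hN.star_mul_mul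

end HilbertSpace

section Blocks

variable {E : Type*} [NormedAddCommGroup E] [InnerProductSpace ℂ E]

theorem Kspace.ext {z w : Kspace E} (hfst : z.fst = w.fst) (hsnd : z.snd = w.snd) : z = w :=
  WithLp.ofLp_injective 2 (Prod.ext hfst hsnd)

@[simp]
theorem blockOp_apply_fst (A B C D : E →L[ℂ] E) (z : Kspace E) :
    (blockOp A B C D z).fst = A z.fst + B z.snd := rfl

@[simp]
theorem blockOp_apply_snd (A B C D : E →L[ℂ] E) (z : Kspace E) :
    (blockOp A B C D z).snd = C z.fst + D z.snd := rfl

theorem blockOp_blk (N : Kspace E →L[ℂ] Kspace E) :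
    blockOp (blkA N) (blkB N) (blkC N) (blkD N) = N := by
  ext z
  have hz : N z = N (WithLp.toLp 2 (z.fst, 0)) + N (WithLp.toLp 2 (0, z.snd)) := by
    rw [← map_add]
    exact congrArg N (Kspace.ext (by simp) (by simp))
  rw [hz]
  exact Kspace.ext rfl rfl

theorem apply_fst_eq_blk (N : Kspace E →L[ℂ] Kspace E) (z : Kspace E) :
    (N z).fst = blkA N z.fst + blkB N z.snd := by
  conv_lhs => rw [← blockOp_blk N, blockOp_apply_fst]

theorem apply_snd_eq_blk (N : Kspace E →L[ℂ] Kspace E) (z : Kspace E) :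
    (N z).snd = blkC N z.fst + blkD N z.snd := by
  conv_lhs => rw [← blockOp_blk N, blockOp_apply_snd]

theorem adjoint_blockOp [CompleteSpace E] (A B C D : E →L[ℂ] E) :
    adjoint (blockOp A B C D) = blockOp (adjoint A) (adjoint C) (adjoint B) (adjoint D) := by
  symm
  rw [eq_adjoint_iff]
  intro x y
  rw [WithLp.prod_inner_apply, WithLp.prod_inner_apply]
  simp only [WithLp.ofLp_fst, WithLp.ofLp_snd, blockOp_apply_fst, blockOp_apply_snd,
    inner_add_left, inner_add_right, adjoint_inner_left]
  ring

theorem adjoint_eq_blockOp [CompleteSpace E] (N : Kspace E →L[ℂ] Kspace E) :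
    adjoint N =
      blockOp (adjoint (blkA N)) (adjoint (blkC N)) (adjoint (blkB N)) (adjoint (blkD N)) := by
  rw [← adjoint_blockOp, blockOp_blk]

end Blocks

section JUnitary

variable {E : Type*} [NormedAddCommGroup E] [InnerProductSpace ℂ E]

/-- The self-adjoint unitary `J = [[1,0],[0,-1]]` on `K`. -/
def Jop (E : Type*) [NormedAddCommGroup E] [InnerProductSpace ℂ E] :
    Kspace E →L[ℂ] Kspace E :=
  blockOp 1 0 0 (-1)

theorem Jop_mul_self : Jop E * Jop E = 1 := by
  ext z
  exact Kspace.ext (by simp [Jop]) (by simp [Jop])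

theorem inner_Jop_self (z : Kspace E) :
    inner ℂ (Jop E z) z = (‖z.fst‖ ^ 2 - ‖z.snd‖ ^ 2 : ℝ) := by
  rw [WithLp.prod_inner_apply]
  simp [Jop, inner_self_eq_norm_sq_to_K, sub_eq_add_neg]

variable [CompleteSpace E] {N : Kspace E →L[ℂ] Kspace E} {U : E →L[ℂ] E}

theorem norm_fst_sq_sub_norm_snd_sq_map (hN : IsFormUnitary (Jop E) N) (z : Kspace E) :
    ‖(N z).fst‖ ^ 2 - ‖(N z).snd‖ ^ 2 = ‖z.fst‖ ^ 2 - ‖z.snd‖ ^ 2 := by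
  have h := hN.inner_map_map z z
  rwa [inner_Jop_self, inner_Jop_self, Complex.ofReal_inj] at h

theorem norm_fst_map_le_norm_snd_map (hN : IsFormUnitary (Jop E) N) {z : Kspace E}
    (hz : ‖z.fst‖ ≤ ‖z.snd‖) : ‖(N z).fst‖ ≤ ‖(N z).snd‖ := by
  have h := norm_fst_sq_sub_norm_snd_sq_map hN z
  have hz_sq := pow_le_pow_left₀ (norm_nonneg _) hz 2
  exact le_of_sq_le_sq (by linarith) (norm_nonneg _)

theorem exists_antilipschitzWith_moebius_denom (hN : IsFormUnitary (Jop E) N) (hU : ‖U‖ ≤ 1) :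
    ∃ c, AntilipschitzWith c (blkC N ∘L U + blkD N) := by
  obtain ⟨c, hc⟩ := exists_antilipschitzWith_of_isUnit hN.isUnit
  refine ⟨c * 2, AddMonoidHomClass.antilipschitz_of_bound _ fun h ↦ ?_⟩
  set z : Kspace E := WithLp.toLp 2 (U h, h)
  have hdenom : (N z).snd = (blkC N ∘L U + blkD N) h := apply_snd_eq_blk N z
  have hz : ‖z.fst‖ ≤ ‖z.snd‖ := by simpa [z] using U.le_of_opNorm_le hU h
  have hfst : ‖(N z).fst‖ ≤ ‖(N z).snd‖ := norm_fst_map_le_norm_snd_map hN hz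
  have hNz : ‖N z‖ ≤ 2 * ‖(N z).snd‖ := by
    refine le_of_sq_le_sq ?_ (by positivity)
    rw [WithLp.prod_norm_sq_eq_of_L2]
    nlinarith [norm_nonneg (N z).fst]
  calc ‖h‖ ≤ ‖z‖ := WithLp.norm_snd_le _ z
    _ ≤ c * ‖N z‖ := hc.le_mul_norm (map_zero N) z
    _ ≤ c * (2 * ‖(N z).snd‖) := by gcongr
    _ = ↑(c * 2) * ‖(blkC N ∘L U + blkD N) h‖ := by rw [hdenom]; push_cast; ring

theorem injective_adjoint_moebius_denom (hN : IsFormUnitary (Jop E) N) (hU : ‖U‖ ≤ 1) :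
    Function.Injective (adjoint (blkC N ∘L U + blkD N)) := by
  refine (injective_iff_map_eq_zero _).2 fun v hv ↦ ?_
  have hN_adj : IsFormUnitary (Jop E) (adjoint N) := IsFormUnitary.star Jop_mul_self hN
  have hform : ‖adjoint (blkC N) v‖ ^ 2 - ‖adjoint (blkD N) v‖ ^ 2 = -‖v‖ ^ 2 := by
    have h := norm_fst_sq_sub_norm_snd_sq_map hN_adj (WithLp.toLp 2 (0, v))
    simpa [adjoint_eq_blockOp] using h
  have hadj : adjoint U (adjoint (blkC N) v) + adjoint (blkD N) v = 0 := by
    simpa [adjoint_comp] using hv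
  have hle : ‖adjoint (blkD N) v‖ ≤ ‖adjoint (blkC N) v‖ := by
    have hU_adj : ‖adjoint U‖ ≤ 1 := by rwa [LinearIsometryEquiv.norm_map]
    rw [eq_neg_of_add_eq_zero_right hadj, norm_neg]
    simpa using (adjoint U).le_of_opNorm_le hU_adj (adjoint (blkC N) v)
  have hle_sq := pow_le_pow_left₀ (norm_nonneg _) hle 2
  have hv_sq : ‖v‖ ^ 2 ≤ 0 := by linarith
  exact norm_eq_zero.1 ((sq_nonpos_iff _).1 hv_sq)

theorem isUnit_moebius_denom (hN : IsFormUnitary (Jop E) N) (hU : ‖U‖ ≤ 1) :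
    IsUnit (blkC N ∘L U + blkD N) := by
  obtain ⟨c, hc⟩ := exists_antilipschitzWith_moebius_denom hN hU
  exact isUnit_iff_bijective.2
    (bijective_of_antilipschitz_of_injective_adjoint hc (injective_adjoint_moebius_denom hN hU))

end JUnitary

section CayleyTransform

theorem Cayley_apply_fst (z : Kspace H) :
    (Cayley H z).fst = (√2 : ℂ)⁻¹ • (z.fst - Complex.I • z.snd) := by
  simp only [Cayley, blockOp_apply_fst, smul_apply, one_apply_eq_self]
  module

theorem Cayley_apply_snd (z : Kspace H) :
    (Cayley H z).snd = (√2 : ℂ)⁻¹ • (z.fst + Complex.I • z.snd) := by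
  simp only [Cayley, blockOp_apply_snd, smul_apply, one_apply_eq_self]
  module

theorem adjoint_Cayley :
    adjoint (Cayley H) =
      blockOp ((√2 : ℂ)⁻¹ • 1) ((√2 : ℂ)⁻¹ • 1)
        (((√2 : ℂ)⁻¹ * Complex.I) • 1) (-((√2 : ℂ)⁻¹ * Complex.I) • 1) := by
  rw [Cayley, adjoint_blockOp]
  simp only [map_smulₛₗ, adjoint_one, map_neg, map_mul, map_inv₀, Complex.conj_ofReal,
    Complex.conj_I, mul_neg, neg_neg]

theorem adjoint_Cayley_apply_fst (z : Kspace H) :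
    (adjoint (Cayley H) z).fst = (√2 : ℂ)⁻¹ • (z.fst + z.snd) := by
  simp only [adjoint_Cayley, blockOp_apply_fst, smul_apply, one_apply_eq_self, smul_add]

theorem adjoint_Cayley_apply_snd (z : Kspace H) :
    (adjoint (Cayley H) z).snd = (√2 : ℂ)⁻¹ • Complex.I • (z.fst - z.snd) := by
  simp only [adjoint_Cayley, blockOp_apply_snd, smul_apply, one_apply_eq_self]
  module

theorem Cayley_mem_unitary : Cayley H ∈ unitary (Kspace H →L[ℂ] Kspace H) := by
  have hsqrt : (√2 : ℂ)⁻¹ * (√2 : ℂ)⁻¹ = 2⁻¹ := by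
    rw [← mul_inv, ← Complex.ofReal_mul, Real.mul_self_sqrt zero_le_two, Complex.ofReal_ofNat]
  constructor <;> ext z <;> apply Kspace.ext <;>
    simp only [star_eq_adjoint, mul_apply_eq_comp, one_apply_eq_self, Cayley_apply_fst,
      Cayley_apply_snd, adjoint_Cayley_apply_fst, adjoint_Cayley_apply_snd] <;>
    match_scalars <;> grind [Complex.I_mul_I]

theorem Jop_mul_Cayley : Jop H * Cayley H = Cayley H * (Complex.I • Iop H) := by
  ext z
  apply Kspace.ext <;>
    simp only [Jop, Iop, mul_apply_eq_comp, smul_apply, one_apply_eq_self, zero_apply, neg_apply,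
      blockOp_apply_fst, blockOp_apply_snd, WithLp.smul_fst, WithLp.smul_snd, Cayley_apply_fst,
      Cayley_apply_snd] <;>
    match_scalars <;> grind [Complex.I_mul_I]

theorem star_Cayley_mul_Jop_mul_Cayley :
    star (Cayley H) * Jop H * Cayley H = Complex.I • Iop H := by
  rw [mul_assoc, Jop_mul_Cayley, ← mul_assoc,
    Unitary.star_mul_self_of_mem (Cayley_mem_unitary (H := H)), one_mul]

theorem isFormUnitary_Jop_Cayley_conj {M : Kspace H →L[ℂ] Kspace H}
    (hM : IsFormUnitary (Iop H) M) :
    IsFormUnitary (Jop H) (Cayley H ∘L M ∘L adjoint (Cayley H)) := by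
  refine IsFormUnitary.conj_unitary (n := M) Cayley_mem_unitary ?_
  rw [star_Cayley_mul_Jop_mul_Cayley]
  exact hM.const_smul Complex.I

theorem Cayley_frameOf_apply (U : H →L[ℂ] H) (h : H) :
    Cayley H (frameOf U h) = (√2 : ℂ)⁻¹ • WithLp.toLp 2 (U h, h) := by
  have hfst : (frameOf U h).fst = (2 : ℂ)⁻¹ • (U h + h) := rfl
  have hsnd : Complex.I • (frameOf U h).snd = -(2 : ℂ)⁻¹ • (U h - h) := by
    change Complex.I • (Complex.I * (2 : ℂ)⁻¹) • (U h - h) = _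
    rw [smul_smul, ← mul_assoc, Complex.I_mul_I, neg_one_mul]
  apply Kspace.ext
  · rw [Cayley_apply_fst, hfst, hsnd, WithLp.smul_fst, WithLp.toLp_fst]
    module
  · rw [Cayley_apply_snd, hfst, hsnd, WithLp.smul_snd, WithLp.toLp_snd]
    module

variable (M : Kspace H →L[ℂ] Kspace H) (U : H →L[ℂ] H)

theorem Cayley_conj_apply_toLp (h : H) :
    (Cayley H ∘L M ∘L adjoint (Cayley H)) (WithLp.toLp 2 (U h, h)) =
      (√2 : ℂ) • Cayley H (M (frameOf U h)) := by
  have hframe : WithLp.toLp 2 (U h, h) = (√2 : ℂ) • Cayley H (frameOf U h) := by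
    rw [Cayley_frameOf_apply, smul_inv_smul₀ (by simp)]
  have hadj : adjoint (Cayley H) (Cayley H (frameOf U h)) = frameOf U h :=
    congrArg (fun T : Kspace H →L[ℂ] Kspace H ↦ T (frameOf U h))
      (Unitary.star_mul_self_of_mem Cayley_mem_unitary)
  rw [comp_apply, comp_apply, hframe, map_smul, hadj, map_smul, map_smul]

theorem moebius_num_Cayley_conj :
    blkA (Cayley H ∘L M ∘L adjoint (Cayley H)) ∘L U +
        blkB (Cayley H ∘L M ∘L adjoint (Cayley H)) =
      cmp1 (M ∘L frameOf U) - Complex.I • cmp2 (M ∘L frameOf U) := by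
  ext h
  have hrow := apply_fst_eq_blk (Cayley H ∘L M ∘L adjoint (Cayley H)) (WithLp.toLp 2 (U h, h))
  rw [Cayley_conj_apply_toLp, WithLp.smul_fst, Cayley_apply_fst, smul_inv_smul₀ (by simp)] at hrow
  exact hrow.symm

theorem moebius_denom_Cayley_conj :
    blkC (Cayley H ∘L M ∘L adjoint (Cayley H)) ∘L U +
        blkD (Cayley H ∘L M ∘L adjoint (Cayley H)) =
      cmp1 (M ∘L frameOf U) + Complex.I • cmp2 (M ∘L frameOf U) := by
  ext h
  have hrow := apply_snd_eq_blk (Cayley H ∘L M ∘L adjoint (Cayley H)) (WithLp.toLp 2 (U h, h))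
  rw [Cayley_conj_apply_toLp, WithLp.smul_snd, Cayley_apply_snd, smul_inv_smul₀ (by simp)] at hrow
  exact hrow.symm

end CayleyTransform

theorem stereographic_intertwines_moebius_general (M : Kspace H →L[ℂ] Kspace H) (U : H →L[ℂ] H)
    (hMinv : IsUnit M) (hMI : adjoint M ∘L Iop H ∘L M = Iop H) (hU : ‖U‖ ≤ 1) :
    IsUnit (cmp1 (M ∘L frameOf U) + Complex.I • cmp2 (M ∘L frameOf U)) ∧
    IsUnit (blkC (Cayley H ∘L M ∘L adjoint (Cayley H)) ∘L U +
      blkD (Cayley H ∘L M ∘L adjoint (Cayley H))) ∧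
    (cmp1 (M ∘L frameOf U) - Complex.I • cmp2 (M ∘L frameOf U)) *
        Ring.inverse (cmp1 (M ∘L frameOf U) + Complex.I • cmp2 (M ∘L frameOf U)) =
      (blkA (Cayley H ∘L M ∘L adjoint (Cayley H)) ∘L U +
        blkB (Cayley H ∘L M ∘L adjoint (Cayley H))) *
        Ring.inverse (blkC (Cayley H ∘L M ∘L adjoint (Cayley H)) ∘L U +
          blkD (Cayley H ∘L M ∘L adjoint (Cayley H))) := by
  have hM : IsFormUnitary (Iop H) M := ⟨hMinv, hMI⟩
  have hdenom := isUnit_moebius_denom (isFormUnitary_Jop_Cayley_conj hM) hU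
  rw [moebius_num_Cayley_conj]
  rw [moebius_denom_Cayley_conj] at hdenom ⊢
  exact ⟨hdenom, hdenom, rfl⟩

/-- Let `M` be `I`-unitary on `K`, `U` unitary on `H`, and `[[A,B],[C,D]]` the blocks of
the `J`-unitary `C M C*`.  If `(a', b')` are the block components of `M Ψ_U`, then
`a' + i b'` is invertible and `(a' − i b')(a' + i b')⁻¹ = (AU + B)(CU + D)⁻¹`: the
stereographic projection intertwines the action of `M` on `I`-Lagrangian frames with the
Möbius action of `C M C*` on unitaries. -/
theorem stereographic_intertwines_moebius (M : Kspace H →L[ℂ] Kspace H) (U : H →L[ℂ] H)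
    (hMinv : IsUnit M) (hMI : adjoint M ∘L Iop H ∘L M = Iop H)
    (hU : U ∈ unitary (H →L[ℂ] H)) :
    IsUnit (cmp1 (M ∘L frameOf U) + Complex.I • cmp2 (M ∘L frameOf U)) ∧
    IsUnit (blkC (Cayley H ∘L M ∘L adjoint (Cayley H)) ∘L U +
      blkD (Cayley H ∘L M ∘L adjoint (Cayley H))) ∧
    (cmp1 (M ∘L frameOf U) - Complex.I • cmp2 (M ∘L frameOf U)) *
        Ring.inverse (cmp1 (M ∘L frameOf U) + Complex.I • cmp2 (M ∘L frameOf U)) =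
      (blkA (Cayley H ∘L M ∘L adjoint (Cayley H)) ∘L U +
        blkB (Cayley H ∘L M ∘L adjoint (Cayley H))) *
        Ring.inverse (blkC (Cayley H ∘L M ∘L adjoint (Cayley H)) ∘L U +
          blkD (Cayley H ∘L M ∘L adjoint (Cayley H))) := by
  exact stereographic_intertwines_moebius_general M U hMinv hMI (norm_le_one_of_mem_unitary hU)
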